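/- For a symmetric positive-definite kernel $k$ on a set $S$ (that is, $k(x,y)=k(y,x)$ and $\sum_{i,j} a_i a_j k(x_i,x_j)\ge 0$ for all finite families of points $x_i\in S$ and reals $a_i$) let $\mathcal H_k$ be its reproducing kernel Hilbert space. For (possibly signed) measures $P,Q$ let $\mathrm{MMD}_k(P,Q)$ be the nonnegative square root of $\iint k\,dP\,dP-2\iint k\,dP\,dQ+\iint k\,dQ\,dQ$, the integrals being finite sums for discrete measures $\sum_i w_i\delta_{u_i}$ with real weights. Let $U\subseteq\mathbb R^s$, $X\subseteq\mathbb R^d$, let $G_\theta:U\to X$ be measurable, let $k$ be a measurable symmetric positive-definite kernel on $X$, and let $c$ be a measurable symmetric positive-definite kernel on $U$. Put $c_\theta(u,v)=k(G_\theta(u),G_\theta(v))$ and suppose that $\mathcal H_{c_\theta}\subseteq\mathcal H_c$ as sets of functions on $U$; equivalently, $f\circ G_\theta\in\mathcal H_c$ for every $f\in\mathcal H_k$ (in particular $u\mapsto k(x,G_\theta(u))$ belongs to $\mathcal H_c$ for every $x\in X$). (a) There exists a constant $K>0$, depending only on $c$, $k$ and $G_\theta$, such that for every Borel probability measure $\mathbb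 U$ on $U$ with $\int\sqrt{c(u,u)}\,d\mathbb U(u)<\infty$, every Borel probability measure $\mathbb Q$ on $X$ with $\int\sqrt{k(x,x)}\,d\mathbb Q(x)<\infty$, every $m$, all points $u_1,\dots,u_m\in U$ and all weights $w\in\mathbb R^m$, $$\bigl|\mathrm{MMD}_k(\mathbb P_\theta,\mathbb Q)-\mathrm{MMD}_k(\mathbb P_\theta^{m,w},\mathbb Q)\bigr|\le K\cdot\mathrm{MMD}_c\Bigl(\mathbb U,\sum_{i=1}^m w_i\delta_{u_i}\Bigr),$$ where $\mathbb P_\theta$ is the pushforward of $\mathbb U$ under $G_\theta$ and $\mathbb P_\theta^{m,w}=\sum_{i=1}^m w_i\delta_{G_\theta(u_i)}$. (b) For every Borel probability measure $\mathbb U$ on $U$ with $\int\sqrt{c(u,u)}\,d\mathbb U(u)<\infty$ and all points $u_1,\dots,u_m\in U$ for which the matrix $C=(c(u_i,u_j))_{i,j}$ is invertible, the function $w\mapsto\mathrm{MMD}_c(\mathbb U,\sum_{i=1}^m w_i\delta_{u_i})$ on $\mathbb R^m$ has exactly one minimiser, namely $w^*=C^{-1}z$ with $z_i=\int c(u_i,v)\,d\mathbb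 U(v)$. -/

import Mathlib

open MeasureTheory

/-- A symmetric, positive-definite (reproducing) kernel. -/
def IsPosDefKernel {S : Type*} (k : S → S → ℝ) : Prop :=
  (∀ x y, k x y = k y x) ∧
    ∀ (n : ℕ) (x : Fin n → S) (a : Fin n → ℝ),
      0 ≤ ∑ i, ∑ j, a i * a j * k (x i) (x j)

/-- The pullback `(u, v) ↦ k (G u) (G v)` of a kernel `k` along a map `G`. -/
def pullbackKernel {S T : Type*} (k : T → T → ℝ) (G : S → T) : S → S → ℝ :=
  fun u v => k (G u) (G v)

theorem IsPosDefKernel.pullback {S T : Type*} {k : T → T → ℝ} (hk : IsPosDefKernel k)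
    (G : S → T) : IsPosDefKernel (pullbackKernel k G) :=
  ⟨fun u v => hk.1 (G u) (G v), fun n x a => hk.2 n (fun i => G (x i)) a⟩

/-- A real-valued kernel as a matrix of operators on the one-dimensional Hilbert space `ℝ`, the
form in which Mathlib's theory of reproducing kernel Hilbert spaces takes it: the entry at `(x, y)`
is multiplication by `k x y`. -/
noncomputable def kernelMatrix {S : Type*} (k : S → S → ℝ) : Matrix S S (ℝ →L[ℝ] ℝ) :=
  Matrix.of fun x y => k x y • (1 : ℝ →L[ℝ] ℝ)

theorem IsPosDefKernel.posSemidef {S : Type*} {k : S → S → ℝ} (hk : IsPosDefKernel k) :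
    (kernelMatrix k).PosSemidef := by
  have t := (RKHS.posSemidef_tfae (K := kernelMatrix k)).out 0 2
  refine t.mpr ⟨?_, fun f => ?_⟩
  · ext x y
    simp [kernelMatrix, Matrix.conjTranspose_apply, hk.1 y x]
  · have h := hk.2 f.support.card (fun i => (f.support.equivFin.symm i : S))
      (fun i => f (f.support.equivFin.symm i : S))
    have e : ∀ g : S → ℝ, ∑ i, g (f.support.equivFin.symm i : S) = ∑ x ∈ f.support, g x := by
      intro g
      rw [Equiv.sum_comp f.support.equivFin.symm (fun x : f.support => g x)]
      exact Finset.sum_coe_sort f.support g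
    have e2 : ∀ x, ∑ j, f x * f (f.support.equivFin.symm j : S) *
        k x (f.support.equivFin.symm j : S) = ∑ y ∈ f.support, f x * f y * k x y :=
      fun x => e (fun y => f x * f y * k x y)
    simp only [e2] at h
    rw [e (fun x => ∑ y ∈ f.support, f x * f y * k x y)] at h
    refine h.trans_eq ?_
    change _ = ∑ x ∈ f.support, ∑ y ∈ f.support, inner ℝ (kernelMatrix k y x (f x)) (f y)
    refine Finset.sum_congr rfl fun x _ => Finset.sum_congr rfl fun y _ => ?_
    simp [kernelMatrix, hk.1 y x]
    ring

/-- The reproducing kernel Hilbert space `H_k` of the kernel `k`, as a set of functions. -/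
noncomputable def rkhs {S : Type*} (k : S → S → ℝ) (hk : IsPosDefKernel k) : Set (S → ℝ) :=
  haveI : Fact (kernelMatrix k).PosSemidef := ⟨hk.posSemidef⟩
  Set.range fun f : RKHS.OfKernel (kernelMatrix k) => (⇑f : S → ℝ)

/-- The MMD between two measures: the nonnegative square root of
`∫∫ k dP dP - 2 ∫∫ k dP dQ + ∫∫ k dQ dQ`. -/
noncomputable def mmd {S : Type*} [MeasurableSpace S] (k : S → S → ℝ) (P Q : Measure S) : ℝ :=
  Real.sqrt ((∫ x, ∫ y, k x y ∂P ∂P) - 2 * (∫ x, ∫ y, k x y ∂Q ∂P) + (∫ x, ∫ y, k x y ∂Q ∂Q))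

/-- The MMD between the signed discrete measure `∑ᵢ wᵢ δ_{yᵢ}` and the measure `P`: the integrals
against the discrete measure are finite sums. -/
noncomputable def mmdDisc {S : Type*} [MeasurableSpace S] (k : S → S → ℝ)
    {m : ℕ} (y : Fin m → S) (w : Fin m → ℝ) (P : Measure S) : ℝ :=
  Real.sqrt ((∑ i, ∑ j, w i * w j * k (y i) (y j)) - 2 * (∑ i, w i * ∫ x, k (y i) x ∂P)
    + (∫ x, ∫ x', k x x' ∂P ∂P))

/-- The weights `c(U,U)⁻¹ z(U)`, where `c(U,U)ᵢⱼ = c(uᵢ, uⱼ)` and `z(U)ᵢ = ∫ c(uᵢ, v) dP(v)`. -/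
noncomputable def optimalWeights {S : Type*} [MeasurableSpace S] (c : S → S → ℝ)
    {m : ℕ} (u : Fin m → S) (P : Measure S) : Fin m → ℝ :=
  Matrix.mulVec (Matrix.of fun i j => c (u i) (u j))⁻¹ (fun i => ∫ v, c (u i) v ∂P)

/-!
Write `φ x` for the representer of evaluation at `x` in the reproducing kernel Hilbert space of a
kernel. Integration against a measure is a bounded functional on this space, so it is the inner
product with a mean embedding, and `MMD` is the distance between mean embeddings.

The inclusion `H_{c_θ} ⊆ H_c` is bounded by the closed graph theorem, and its adjoint maps the
representers of `H_c` to those of `H_{c_θ}`. The latter have the same inner products as the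
representers of `H_k` at the points `G u`, so there is a bounded operator `L : H_c → H_k` that maps
the representer at `u` to the one at `G u`, hence also the mean embedding of `𝕌` to that of its
pushforward. The reverse triangle inequality in `H_k` then gives the bound with constant `‖L‖`.

Minimising over the weights is a least-squares problem in `H_c`: the weights `C⁻¹ z` solve the
normal equations, and Pythagoras together with the linear independence of the representers, whose
Gram matrix is `C`, gives uniqueness.
-/

open Filter Topology
open scoped InnerProductSpace Matrix

section LeastSquares

variable {ι E : Type*} [Fintype ι] [NormedAddCommGroup E] [InnerProductSpace ℝ E]
  {v : ι → E} {μ : E} {w₀ : ι → ℝ}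

theorem inner_sum_smul_sub_eq_zero_of_gram_mulVec_eq
    (hw₀ : Matrix.gram ℝ v *ᵥ w₀ = fun i => ⟪v i, μ⟫_ℝ) (a : ι → ℝ) :
    ⟪∑ i, a i • v i, ∑ i, w₀ i • v i - μ⟫_ℝ = 0 := by
  have hresidual (i : ι) : ⟪v i, ∑ j, w₀ j • v j - μ⟫_ℝ = 0 := by
    rw [inner_sub_right, sub_eq_zero, ← congrFun hw₀ i]
    simp only [inner_sum, real_inner_smul_right, Matrix.mulVec, dotProduct, Matrix.gram_apply,
      mul_comm]
  simp only [sum_inner, real_inner_smul_left, hresidual, mul_zero, Finset.sum_const_zero]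

theorem norm_sum_smul_sub_sq_of_gram_mulVec_eq
    (hw₀ : Matrix.gram ℝ v *ᵥ w₀ = fun i => ⟪v i, μ⟫_ℝ) (w : ι → ℝ) :
    ‖∑ i, w i • v i - μ‖ ^ 2 =
      ‖∑ i, (w - w₀) i • v i‖ ^ 2 + ‖∑ i, w₀ i • v i - μ‖ ^ 2 := by
  have hsplit : ∑ i, w i • v i - μ = ∑ i, (w - w₀) i • v i + (∑ i, w₀ i • v i - μ) := by
    simp only [Pi.sub_apply, sub_smul, Finset.sum_sub_distrib]
    abel
  simp only [hsplit, sq]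
  exact norm_add_sq_eq_norm_sq_add_norm_sq_real
    (inner_sum_smul_sub_eq_zero_of_gram_mulVec_eq hw₀ (w - w₀))

theorem setOf_forall_norm_sum_smul_sub_le_eq_singleton (hv : LinearIndependent ℝ v)
    (hw₀ : Matrix.gram ℝ v *ᵥ w₀ = fun i => ⟪v i, μ⟫_ℝ) :
    {w : ι → ℝ | ∀ w' : ι → ℝ, ‖∑ i, w i • v i - μ‖ ≤ ‖∑ i, w' i • v i - μ‖} = {w₀} := by
  have hpythagoras := norm_sum_smul_sub_sq_of_gram_mulVec_eq hw₀
  ext w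
  refine ⟨fun hw => ?_, ?_⟩
  · have hsq : ‖∑ i, (w - w₀) i • v i‖ ^ 2 ≤ 0 := by
      linarith [hpythagoras w, pow_le_pow_left₀ (norm_nonneg _) (hw w₀) 2]
    have hzero : ∑ i, (w - w₀) i • v i = 0 := by
      simpa using hsq.antisymm (sq_nonneg _)
    exact funext fun i => sub_eq_zero.mp (Fintype.linearIndependent_iff.mp hv _ hzero i)
  · rintro rfl w'
    refine (sq_le_sq₀ (norm_nonneg _) (norm_nonneg _)).mp ?_
    linarith [hpythagoras w', sq_nonneg ‖∑ i, (w' - w) i • v i‖]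

end LeastSquares

section FeatureMap

variable {S E F : Type*} [NormedAddCommGroup E] [InnerProductSpace ℝ E]
  [NormedAddCommGroup F] [InnerProductSpace ℝ F]

/-- `φ` is a feature map of the kernel `k`: the kernel is the inner product of the features. The
canonical one sends a point to its representer of evaluation in the space `H_k`. -/
def IsFeatureMap (k : S → S → ℝ) (φ : S → E) : Prop :=
  ∀ x y, k x y = ⟪φ x, φ y⟫_ℝ

theorem IsFeatureMap.norm_eq_sqrt {k : S → S → ℝ} {φ : S → E} (hφ : IsFeatureMap k φ) (x : S) :
    ‖φ x‖ = √(k x x) := by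
  rw [hφ, ← norm_eq_sqrt_real_inner]

theorem IsFeatureMap.gram_comp {k : S → S → ℝ} {φ : S → E} (hφ : IsFeatureMap k φ) {ι : Type*}
    (y : ι → S) : Matrix.gram ℝ (φ ∘ y) = Matrix.of fun i j => k (y i) (y j) :=
  Matrix.ext fun i j => (hφ (y i) (y j)).symm

theorem IsFeatureMap.norm_linearCombination_eq {k : S → S → ℝ} {φ : S → E} {ψ : S → F}
    (hφ : IsFeatureMap k φ) (hψ : IsFeatureMap k ψ) (a : S →₀ ℝ) :
    ‖Finsupp.linearCombination ℝ ψ a‖ = ‖Finsupp.linearCombination ℝ φ a‖ := by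
  rw [norm_eq_sqrt_real_inner, norm_eq_sqrt_real_inner]
  simp only [Finsupp.linearCombination_apply, Finsupp.sum_inner, Finsupp.inner_sum,
    real_inner_smul_left, real_inner_smul_right, ← hφ _ _, ← hψ _ _]

theorem IsFeatureMap.exists_continuousLinearMap_apply_eq [CompleteSpace F] {k : S → S → ℝ}
    {φ : S → E} {ψ : S → F} (hφ : IsFeatureMap k φ) (hψ : IsFeatureMap k ψ)
    (hdense : Dense (Submodule.span ℝ (Set.range φ) : Set E)) :
    ∃ V : E →L[ℝ] F, ∀ x, V (φ x) = ψ x := by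
  have hrange : DenseRange (Finsupp.linearCombination ℝ φ) := by
    rwa [DenseRange, ← LinearMap.coe_range, Finsupp.range_linearCombination]
  refine ⟨(Finsupp.linearCombination ℝ ψ).extendOfNorm (Finsupp.linearCombination ℝ φ),
    fun x => ?_⟩
  have hbound : ∃ C, ∀ a : S →₀ ℝ,
      ‖Finsupp.linearCombination ℝ ψ a‖ ≤ C * ‖Finsupp.linearCombination ℝ φ a‖ :=
    ⟨1, fun a => by rw [one_mul, hφ.norm_linearCombination_eq hψ]⟩
  simpa using LinearMap.extendOfNorm_eq hrange hbound (Finsupp.single x 1)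

theorem measurable_inner_of_dense_span [MeasurableSpace S] {φ : S → E}
    (hdense : Dense (Submodule.span ℝ (Set.range φ) : Set E))
    (hφ : ∀ x, Measurable fun y => ⟪φ x, φ y⟫_ℝ) (f : E) : Measurable fun y => ⟪φ y, f⟫_ℝ := by
  have hspan : ∀ g ∈ Submodule.span ℝ (Set.range φ), Measurable fun y => ⟪φ y, g⟫_ℝ := by
    intro g hg
    induction hg using Submodule.span_induction with
    | mem g hg =>
      obtain ⟨x, rfl⟩ := hg
      simpa only [real_inner_comm] using hφ x
    | zero => simp only [inner_zero_right, measurable_const]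
    | add g g' _ _ hg hg' => simpa only [inner_add_right] using! hg.add hg'
    | smul a g _ hg => simpa only [real_inner_smul_right] using hg.const_mul a
  obtain ⟨g, hg, hlim⟩ := mem_closure_iff_seq_limit.mp (hdense f)
  exact measurable_of_tendsto_metrizable (fun n => hspan _ (hg n))
    (tendsto_pi_nhds.mpr fun y => tendsto_const_nhds.inner hlim)

end FeatureMap

section WeakIntegral

variable {S T E F : Type*} [MeasurableSpace S] [MeasurableSpace T]
  [NormedAddCommGroup E] [InnerProductSpace ℝ E] [NormedAddCommGroup F] [InnerProductSpace ℝ F]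

/-- `μ` is the weak (Pettis) integral `∫ φ dP`. When `φ` is a feature map of a kernel, this is the
mean embedding of `P`. The weak form asks only for measurability of the functions `⟪φ ·, f⟫`, which
measurability of the kernel provides even if the Hilbert space is not separable. -/
def IsWeakIntegral (φ : S → E) (P : Measure S) (μ : E) : Prop :=
  ∀ f : E, Integrable (fun x => ⟪φ x, f⟫_ℝ) P ∧ ∫ x, ⟪φ x, f⟫_ℝ ∂P = ⟪μ, f⟫_ℝ

theorem exists_isWeakIntegral [CompleteSpace E] {φ : S → E} {P : Measure S}
    (hmeas : ∀ f : E, AEStronglyMeasurable (fun x => ⟪φ x, f⟫_ℝ) P)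
    (hnorm : Integrable (fun x => ‖φ x‖) P) : ∃ μ : E, IsWeakIntegral φ P μ := by
  have hbound (f : E) : ∀ᵐ x ∂P, ‖⟪φ x, f⟫_ℝ‖ ≤ ‖φ x‖ * ‖f‖ :=
    ae_of_all _ fun x => norm_inner_le_norm (φ x) f
  have hint (f : E) : Integrable (fun x => ⟪φ x, f⟫_ℝ) P :=
    (hnorm.mul_const ‖f‖).mono' (hmeas f) (hbound f)
  let integralInner : E →ₗ[ℝ] ℝ :=
    { toFun := fun f => ∫ x, ⟪φ x, f⟫_ℝ ∂P
      map_add' := fun f g => by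
        simp only [inner_add_right, integral_add (hint f) (hint g)]
      map_smul' := fun a f => by
        simp only [real_inner_smul_right, integral_const_mul, smul_eq_mul, RingHom.id_apply] }
  have hcont (f : E) : ‖integralInner f‖ ≤ (∫ x, ‖φ x‖ ∂P) * ‖f‖ :=
    (norm_integral_le_of_norm_le (hnorm.mul_const ‖f‖) (hbound f)).trans_eq
      (integral_mul_const _ _)
  refine ⟨(InnerProductSpace.toDual ℝ E).symm (integralInner.mkContinuous _ hcont),
    fun f => ⟨hint f, ?_⟩⟩
  rw [InnerProductSpace.toDual_symm_apply]
  rfl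

theorem IsWeakIntegral.continuousLinearMap_comp [CompleteSpace E] [CompleteSpace F] {φ : S → E}
    {P : Measure S} {μ : E} (hμ : IsWeakIntegral φ P μ) (L : E →L[ℝ] F) :
    IsWeakIntegral (fun x => L (φ x)) P (L μ) := fun f => by
  simpa only [ContinuousLinearMap.adjoint_inner_right] using hμ (L.adjoint f)

theorem IsWeakIntegral.map_measure {ψ : T → E} {G : S → T} (hG : Measurable G)
    (hmeas : ∀ f : E, Measurable fun y => ⟪ψ y, f⟫_ℝ) {P : Measure S} {μ : E}
    (hμ : IsWeakIntegral (fun u => ψ (G u)) P μ) : IsWeakIntegral ψ (P.map G) μ := fun f => by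
  rw [integrable_map_measure (hmeas f).aestronglyMeasurable hG.aemeasurable,
    integral_map hG.aemeasurable (hmeas f).aestronglyMeasurable]
  exact hμ f

end WeakIntegral

section MMD

variable {S T E F : Type*} [MeasurableSpace S] [MeasurableSpace T]
  [NormedAddCommGroup E] [InnerProductSpace ℝ E] [NormedAddCommGroup F] [InnerProductSpace ℝ F]
  {k : S → S → ℝ} {φ : S → E} {P Q : Measure S} {μ ν : E}

theorem IsFeatureMap.integral_kernel (hφ : IsFeatureMap k φ) (hμ : IsWeakIntegral φ P μ) (x : S) :
    ∫ y, k x y ∂P = ⟪φ x, μ⟫_ℝ := by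
  simp only [hφ x, real_inner_comm _ (φ x)]
  exact (hμ (φ x)).2

theorem IsFeatureMap.integral_integral_kernel (hφ : IsFeatureMap k φ)
    (hμ : IsWeakIntegral φ P μ) (hν : IsWeakIntegral φ Q ν) :
    ∫ x, ∫ y, k x y ∂Q ∂P = ⟪μ, ν⟫_ℝ := by
  simp only [hφ.integral_kernel hν]
  exact (hμ ν).2

theorem IsFeatureMap.mmd_eq_norm_sub (hφ : IsFeatureMap k φ)
    (hμ : IsWeakIntegral φ P μ) (hν : IsWeakIntegral φ Q ν) : mmd k P Q = ‖μ - ν‖ := by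
  rw [mmd, hφ.integral_integral_kernel hμ hμ, hφ.integral_integral_kernel hμ hν,
    hφ.integral_integral_kernel hν hν, real_inner_self_eq_norm_sq, real_inner_self_eq_norm_sq,
    ← norm_sub_sq_real, Real.sqrt_sq (norm_nonneg _)]

theorem IsFeatureMap.mmdDisc_eq_norm_sub (hφ : IsFeatureMap k φ) (hμ : IsWeakIntegral φ P μ)
    {m : ℕ} (y : Fin m → S) (w : Fin m → ℝ) :
    mmdDisc k y w P = ‖∑ i, w i • φ (y i) - μ‖ := by
  have hquad : ∑ i, ∑ j, w i * w j * k (y i) (y j) = ‖∑ i, w i • φ (y i)‖ ^ 2 := by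
    rw [← real_inner_self_eq_norm_sq, sum_inner]
    simp only [inner_sum, real_inner_smul_left, real_inner_smul_right, hφ _ _, mul_assoc,
      mul_left_comm]
  have hcross : ∑ i, w i * ∫ x, k (y i) x ∂P = ⟪∑ i, w i • φ (y i), μ⟫_ℝ := by
    simp only [hφ.integral_kernel hμ, sum_inner, real_inner_smul_left]
  rw [mmdDisc, hquad, hcross, hφ.integral_integral_kernel hμ hμ, real_inner_self_eq_norm_sq,
    ← norm_sub_sq_real, Real.sqrt_sq (norm_nonneg _)]

theorem IsFeatureMap.setOf_forall_mmdDisc_le_eq_singleton (hφ : IsFeatureMap k φ)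
    (hμ : IsWeakIntegral φ P μ) {m : ℕ} {y : Fin m → S}
    (hy : IsUnit (Matrix.of fun i j => k (y i) (y j))) :
    {w : Fin m → ℝ | ∀ w' : Fin m → ℝ, mmdDisc k y w P ≤ mmdDisc k y w' P} =
      {optimalWeights k y P} := by
  have hdet := (Matrix.isUnit_iff_isUnit_det _).mp hy
  have hindep : LinearIndependent ℝ (φ ∘ y) :=
    Matrix.linearIndependent_of_det_gram_ne_zero (hφ.gram_comp y ▸ hdet.ne_zero)
  have hnormal : Matrix.gram ℝ (φ ∘ y) *ᵥ optimalWeights k y P = fun i => ⟪(φ ∘ y) i, μ⟫_ℝ := by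
    rw [hφ.gram_comp, optimalWeights, Matrix.mulVec_mulVec, Matrix.mul_nonsing_inv _ hdet,
      Matrix.one_mulVec]
    exact funext fun i => hφ.integral_kernel hμ (y i)
  simp only [hφ.mmdDisc_eq_norm_sub hμ]
  exact setOf_forall_norm_sum_smul_sub_le_eq_singleton hindep hnormal

theorem IsFeatureMap.abs_mmd_map_sub_mmdDisc_le [CompleteSpace E] [CompleteSpace F]
    {l : T → T → ℝ} {ψ : T → F} (hφ : IsFeatureMap k φ) (hψ : IsFeatureMap l ψ)
    (hψ_meas : ∀ f : F, Measurable fun y => ⟪ψ y, f⟫_ℝ) {G : S → T} (hG : Measurable G)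
    {L : E →L[ℝ] F} (hL : ∀ u, L (φ u) = ψ (G u)) (hμ : IsWeakIntegral φ P μ)
    {R : Measure T} {ρ : F} (hρ : IsWeakIntegral ψ R ρ) {m : ℕ} (u : Fin m → S) (w : Fin m → ℝ) :
    |mmd l (P.map G) R - mmdDisc l (fun i => G (u i)) w R| ≤ ‖L‖ * mmdDisc k u w P := by
  have hLμ : IsWeakIntegral ψ (P.map G) (L μ) := by
    have h := hμ.continuousLinearMap_comp L
    simp only [hL] at h
    exact h.map_measure hG hψ_meas
  have hLsum : ∑ i, w i • ψ (G (u i)) = L (∑ i, w i • φ (u i)) := by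
    simp only [map_sum, map_smul, hL]
  calc |mmd l (P.map G) R - mmdDisc l (fun i => G (u i)) w R|
      = |‖L μ - ρ‖ - ‖L (∑ i, w i • φ (u i)) - ρ‖| := by
        rw [hψ.mmd_eq_norm_sub hLμ hρ, hψ.mmdDisc_eq_norm_sub hρ, hLsum]
    _ ≤ ‖L (∑ i, w i • φ (u i) - μ)‖ := by
        rw [abs_sub_comm, map_sub, ← sub_sub_sub_cancel_right _ (L μ) ρ]
        exact abs_norm_sub_norm_le _ _
    _ ≤ ‖L‖ * mmdDisc k u w P := by
        rw [hφ.mmdDisc_eq_norm_sub hμ]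
        exact L.le_opNorm _

end MMD

section Inclusion

variable {𝕜 X V H H' : Type*} [RCLike 𝕜] [NormedAddCommGroup V] [InnerProductSpace 𝕜 V]
  [NormedAddCommGroup H] [InnerProductSpace 𝕜 H] [CompleteSpace H] [RKHS 𝕜 H X V]
  [NormedAddCommGroup H'] [InnerProductSpace 𝕜 H'] [CompleteSpace H'] [RKHS 𝕜 H' X V]

theorem exists_continuousLinearMap_coe_eq_of_range_subset
    (hsub : (Set.range fun f : H => (f : X → V)) ⊆ Set.range fun g : H' => (g : X → V)) :
    ∃ J : H →L[𝕜] H', ∀ f : H, (J f : X → V) = f := by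
  choose j hj using fun f : H => hsub ⟨f, rfl⟩
  let J : H →ₗ[𝕜] H' :=
    { toFun := j
      map_add' := fun f g => DFunLike.coe_injective (by simp [hj])
      map_smul' := fun a f => DFunLike.coe_injective (by simp [hj]) }
  -- Evaluations are continuous on both spaces, so limits in both are pointwise limits.
  refine ⟨ContinuousLinearMap.ofSeqClosedGraph (g := J) fun u f g hu hJu => RKHS.ext fun x => ?_,
    hj⟩
  have hf : Tendsto (fun n => u n x) atTop (𝓝 (f x)) :=
    ((RKHS.continuous_eval x).tendsto f).comp hu
  have hg : Tendsto (fun n => j (u n) x) atTop (𝓝 (g x)) :=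
    ((RKHS.continuous_eval x).tendsto g).comp hJu
  simp only [hj] at hg
  exact (tendsto_nhds_unique hg hf).trans (congrFun (hj f) x).symm

theorem adjoint_kerFun_of_coe_eq [CompleteSpace V] {J : H →L[𝕜] H'}
    (hJ : ∀ f : H, (J f : X → V) = f) (x : X) (v : V) :
    J.adjoint (RKHS.kerFun H' x v) = RKHS.kerFun H x v :=
  ext_inner_right 𝕜 fun f => by
    rw [ContinuousLinearMap.adjoint_inner_left, RKHS.kerFun_inner, RKHS.kerFun_inner, hJ]

end Inclusion

section EvalRepr

variable {S : Type*} (H : Type*) [NormedAddCommGroup H] [InnerProductSpace ℝ H] [CompleteSpace H]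
  [RKHS ℝ H S ℝ]

/-- The representer of evaluation at `x` in a reproducing kernel Hilbert space of real-valued
functions. -/
noncomputable def evalRepr (x : S) : H :=
  RKHS.kerFun H x (1 : ℝ)

theorem dense_span_range_evalRepr :
    Dense (Submodule.span ℝ (Set.range (evalRepr H : S → H)) : Set H) := by
  rw [Submodule.dense_iff_topologicalClosure_eq_top, ← top_le_iff, ← RKHS.kerFun_dense (𝕜 := ℝ) H]
  refine Submodule.topologicalClosure_mono (Submodule.span_le.mpr ?_)
  rintro _ ⟨x, v, rfl⟩
  have hv : RKHS.kerFun H x v = v • evalRepr H x := by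
    rw [evalRepr, ← map_smul, smul_eq_mul, mul_one]
  exact hv ▸ Submodule.smul_mem _ v (Submodule.subset_span ⟨x, rfl⟩)

end EvalRepr

section OfKernel

open RKHS (OfKernel)

variable {S T : Type*} {k : S → S → ℝ} [Fact (kernelMatrix k).PosSemidef]

theorem isFeatureMap_evalRepr_ofKernel :
    IsFeatureMap k (evalRepr (OfKernel (kernelMatrix k))) := fun x y => by
  rw [evalRepr, RKHS.kerFun_inner, evalRepr, RKHS.kerFun_apply, OfKernel.kernel_ofKernel]
  simp [kernelMatrix]

theorem measurable_inner_evalRepr_ofKernel [MeasurableSpace S] (hmeas : ∀ x, Measurable (k x))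
    (f : OfKernel (kernelMatrix k)) :
    Measurable fun x => ⟪evalRepr (OfKernel (kernelMatrix k)) x, f⟫_ℝ :=
  measurable_inner_of_dense_span (dense_span_range_evalRepr _)
    (fun x => by simpa only [← isFeatureMap_evalRepr_ofKernel _ _] using hmeas x) f

theorem exists_isWeakIntegral_evalRepr_ofKernel [MeasurableSpace S]
    (hmeas : ∀ x, Measurable (k x)) {P : Measure S} (hP : Integrable (fun x => √(k x x)) P) :
    ∃ μ, IsWeakIntegral (evalRepr (OfKernel (kernelMatrix k))) P μ := by
  refine exists_isWeakIntegral
    (fun f => (measurable_inner_evalRepr_ofKernel hmeas f).aestronglyMeasurable) ?_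
  simpa only [isFeatureMap_evalRepr_ofKernel.norm_eq_sqrt] using hP

theorem exists_continuousLinearMap_evalRepr_eq_of_rkhs_pullback_subset {c : T → T → ℝ}
    [Fact (kernelMatrix c).PosSemidef] {G : T → S} (hk : IsPosDefKernel k) (hc : IsPosDefKernel c)
    (hsub : rkhs (pullbackKernel k G) (hk.pullback G) ⊆ rkhs c hc) :
    ∃ L : OfKernel (kernelMatrix c) →L[ℝ] OfKernel (kernelMatrix k),
      ∀ u, L (evalRepr _ u) = evalRepr _ (G u) := by
  have : Fact (kernelMatrix (pullbackKernel k G)).PosSemidef := ⟨(hk.pullback G).posSemidef⟩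
  obtain ⟨J, hJ⟩ := exists_continuousLinearMap_coe_eq_of_range_subset
    (H := OfKernel (kernelMatrix (pullbackKernel k G))) (H' := OfKernel (kernelMatrix c)) hsub
  have hfeature : IsFeatureMap (pullbackKernel k G)
      fun u => evalRepr (OfKernel (kernelMatrix k)) (G u) :=
    fun u v => isFeatureMap_evalRepr_ofKernel (G u) (G v)
  obtain ⟨V, hV⟩ := isFeatureMap_evalRepr_ofKernel.exists_continuousLinearMap_apply_eq hfeature
    (dense_span_range_evalRepr _)
  refine ⟨V ∘L J.adjoint, fun u => ?_⟩
  rw [ContinuousLinearMap.comp_apply, evalRepr, adjoint_kerFun_of_coe_eq hJ]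
  exact hV u

end OfKernel

theorem mmd_optimally_weighted_bound_general
    {S T : Type*} [MeasurableSpace S] [MeasurableSpace T]
    {G : S → T} (hG : Measurable G)
    {k : T → T → ℝ} (hk : IsPosDefKernel k) (hk_meas : ∀ x, Measurable (k x))
    {c : S → S → ℝ} (hc : IsPosDefKernel c) (hc_meas : ∀ u, Measurable (c u))
    (hsub : rkhs (pullbackKernel k G) (hk.pullback G) ⊆ rkhs c hc) :
    (∃ K : ℝ, 0 < K ∧
      ∀ P : Measure S, Integrable (fun u => √(c u u)) P →
      ∀ Q : Measure T, Integrable (fun x => √(k x x)) Q →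
      ∀ (m : ℕ) (u : Fin m → S) (w : Fin m → ℝ),
        |mmd k (P.map G) Q - mmdDisc k (fun i => G (u i)) w Q| ≤ K * mmdDisc c u w P) ∧
    (∀ P : Measure S, Integrable (fun u => √(c u u)) P →
      ∀ (m : ℕ) (u : Fin m → S), IsUnit (Matrix.of fun i j => c (u i) (u j)) →
        {w : Fin m → ℝ | ∀ w' : Fin m → ℝ, mmdDisc c u w P ≤ mmdDisc c u w' P} =
          {optimalWeights c u P}) := by
  have : Fact (kernelMatrix k).PosSemidef := ⟨hk.posSemidef⟩
  have : Fact (kernelMatrix c).PosSemidef := ⟨hc.posSemidef⟩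
  refine ⟨?_, fun P hP m u hu => ?_⟩
  · obtain ⟨L, hL⟩ := exists_continuousLinearMap_evalRepr_eq_of_rkhs_pullback_subset hk hc hsub
    refine ⟨‖L‖ + 1, by positivity, fun P hP Q hQ m u w => ?_⟩
    obtain ⟨μ, hμ⟩ := exists_isWeakIntegral_evalRepr_ofKernel hc_meas hP
    obtain ⟨ν, hν⟩ := exists_isWeakIntegral_evalRepr_ofKernel hk_meas hQ
    calc |mmd k (P.map G) Q - mmdDisc k (fun i => G (u i)) w Q|
        ≤ ‖L‖ * mmdDisc c u w P :=
          isFeatureMap_evalRepr_ofKernel.abs_mmd_map_sub_mmdDisc_le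
            isFeatureMap_evalRepr_ofKernel (measurable_inner_evalRepr_ofKernel hk_meas) hG hL
            hμ hν u w
      _ ≤ (‖L‖ + 1) * mmdDisc c u w P :=
          mul_le_mul_of_nonneg_right (le_add_of_nonneg_right zero_le_one) (Real.sqrt_nonneg _)
  · obtain ⟨μ, hμ⟩ := exists_isWeakIntegral_evalRepr_ofKernel hc_meas hP
    exact isFeatureMap_evalRepr_ofKernel.setOf_forall_mmdDisc_le_eq_singleton hμ hu

theorem mmd_optimally_weighted_bound
    {s d : ℕ}
    (U : Set (EuclideanSpace ℝ (Fin s))) (X : Set (EuclideanSpace ℝ (Fin d)))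
    (G : U → X) (hG : Measurable G)
    (k : X → X → ℝ) (hk : IsPosDefKernel k) (hk_meas : ∀ x, Measurable (k x))
    (c : U → U → ℝ) (hc : IsPosDefKernel c) (hc_meas : ∀ u, Measurable (c u))
    (hsub : rkhs (pullbackKernel k G) (hk.pullback G) ⊆ rkhs c hc) :
    -- the constant depends on `c`, `k`, `G` only
    (∃ K : ℝ, 0 < K ∧
      ∀ 𝕌 : Measure U, IsProbabilityMeasure 𝕌 → Integrable (fun u => Real.sqrt (c u u)) 𝕌 →
      ∀ Q : Measure X, IsProbabilityMeasure Q → Integrable (fun x => Real.sqrt (k x x)) Q →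
      ∀ (m : ℕ) (u : Fin m → U) (w : Fin m → ℝ),
        |mmd k (Measure.map G 𝕌) Q - mmdDisc k (fun i => G (u i)) w Q| ≤
          K * mmdDisc c u w 𝕌) ∧
    -- the minimiser of the bound over the weights, in closed form
    (∀ 𝕌 : Measure U, IsProbabilityMeasure 𝕌 → Integrable (fun u => Real.sqrt (c u u)) 𝕌 →
      ∀ (m : ℕ) (u : Fin m → U), IsUnit (Matrix.of fun i j => c (u i) (u j)) →
        {w : Fin m → ℝ | ∀ w' : Fin m → ℝ, mmdDisc c u w 𝕌 ≤ mmdDisc c u w' 𝕌} =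
          {optimalWeights c u 𝕌}) := by
  obtain ⟨⟨K, hK, hbound⟩, hmin⟩ :=
    mmd_optimally_weighted_bound_general hG hk hk_meas hc hc_meas hsub
  exact ⟨⟨K, hK, fun 𝕌 _ h𝕌 Q _ hQ => hbound 𝕌 h𝕌 Q hQ⟩, fun 𝕌 _ => hmin 𝕌⟩
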